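/- arXiv:1803.02306 — 7 statements merged into one kernel-verified Lean document; each statement's English description precedes it below -/
import Mathlib

section
/- Let C be a symmetric real 3×3 matrix and μ a skew-symmetric real 3×3 matrix, and let D be the 6×6 block matrix D = [[C, −μ], [μ, C]]. Then D is positive definite if and only if (i) C is positive definite and (ii) ⟨μa, b⟩² < ⟨Ca, a⟩·⟨Cb, b⟩ for all nonzero vectors a, b ∈ ℝ³. -/
open Matrix

lemma block_form (C μ : Matrix (Fin 3) (Fin 3) ℝ) (hμ : μᵀ = -μ) (a b : Fin 3 → ℝ) :
    (Sum.elim a b) ⬝ᵥ ((Matrix.fromBlocks C (-μ) μ C) *ᵥ (Sum.elim a b)) =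
      C *ᵥ a ⬝ᵥ a + C *ᵥ b ⬝ᵥ b + 2 * (μ *ᵥ a ⬝ᵥ b) := by
  have h : a ⬝ᵥ μ *ᵥ b = - (μ *ᵥ a ⬝ᵥ b) := by
    rw [dotProduct_mulVec, ← mulVec_transpose, hμ, neg_mulVec, neg_dotProduct]
  rw [fromBlocks_mulVec, sumElim_dotProduct_sumElim]
  simp only [Sum.elim_comp_inl, Sum.elim_comp_inr, dotProduct_add, neg_mulVec, dotProduct_neg, h]
  rw [dotProduct_comm a, dotProduct_comm b, dotProduct_comm b]
  ring

/-- Let `C` be a symmetric real 3×3 matrix and `μ` a skew-symmetric real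
3×3 matrix, and let `D` be the 6×6 block matrix `D = [[C, −μ], [μ, C]]`. Then `D` is
positive definite if and only if (i) `C` is positive definite and (ii)
`⟨μa, b⟩² < ⟨Ca, a⟩ ⟨Cb, b⟩` for all nonzero `a, b ∈ ℝ³`. -/
theorem pos_def_block_iff (C μ : Matrix (Fin 3) (Fin 3) ℝ)
    (hC : C.IsSymm) (hμ : μᵀ = -μ) :
    (Matrix.fromBlocks C (-μ) μ C).PosDef ↔
      C.PosDef ∧ ∀ a b : Fin 3 → ℝ, a ≠ 0 → b ≠ 0 →
        (μ.mulVec a ⬝ᵥ b) ^ 2 < (C.mulVec a ⬝ᵥ a) * (C.mulVec b ⬝ᵥ b) := by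
  have hCH : C.IsHermitian := by
    rw [Matrix.IsHermitian, conjTranspose_eq_transpose_of_trivial]; exact hC
  have hDH : (Matrix.fromBlocks C (-μ) μ C).IsHermitian := by
    rw [Matrix.IsHermitian, conjTranspose_eq_transpose_of_trivial, fromBlocks_transpose,
      transpose_neg, hμ, neg_neg, hC.eq]
  rw [posDef_iff_dotProduct_mulVec, posDef_iff_dotProduct_mulVec]
  simp only [hCH, hDH, true_and, star_trivial]
  constructor
  · intro h
    have key : ∀ a b : Fin 3 → ℝ, (a ≠ 0 ∨ b ≠ 0) →
        0 < C *ᵥ a ⬝ᵥ a + C *ᵥ b ⬝ᵥ b + 2 * (μ *ᵥ a ⬝ᵥ b) := by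
      intro a b hab
      rw [← block_form C μ hμ]
      apply h
      intro h0
      have ha : a = 0 := funext fun i => congrFun h0 (Sum.inl i)
      have hb : b = 0 := funext fun i => congrFun h0 (Sum.inr i)
      tauto
    have hP : ∀ a : Fin 3 → ℝ, a ≠ 0 → 0 < C *ᵥ a ⬝ᵥ a := by
      intro a ha
      simpa using key a 0 (Or.inl ha)
    refine ⟨fun {a} ha => by rw [dotProduct_comm]; exact hP a ha, fun a b ha hb => ?_⟩
    have hB := hP b hb
    have := key ((C *ᵥ b ⬝ᵥ b) • a) (-(μ *ᵥ a ⬝ᵥ b) • b)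
      (Or.inl (smul_ne_zero hB.ne' ha))
    simp only [mulVec_smul, smul_dotProduct, dotProduct_smul, smul_eq_mul] at this
    have h2 : 0 < (C *ᵥ b ⬝ᵥ b) * ((C *ᵥ a ⬝ᵥ a) * (C *ᵥ b ⬝ᵥ b) - (μ *ᵥ a ⬝ᵥ b) ^ 2) := by
      linarith
    have := (mul_pos_iff_of_pos_left hB).1 h2
    linarith
  · rintro ⟨h1, h2⟩ x hx
    have hP : ∀ a : Fin 3 → ℝ, a ≠ 0 → 0 < C *ᵥ a ⬝ᵥ a := by
      intro a ha
      rw [dotProduct_comm]; exact h1 ha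
    obtain ⟨a, b, rfl⟩ : ∃ a b, x = Sum.elim a b :=
      ⟨x ∘ Sum.inl, x ∘ Sum.inr, (Sum.elim_comp_inl_inr x).symm⟩
    rw [block_form C μ hμ]
    by_cases ha : a = 0
    · subst ha
      have hb : b ≠ 0 := by
        rintro rfl
        exact hx (by ext i; cases i <;> rfl)
      simpa using hP b hb
    by_cases hb : b = 0
    · subst hb
      simpa using hP a ha
    have hA := hP a ha
    have hB := hP b hb
    have h3 := h2 a b ha hb
    generalize C *ᵥ a ⬝ᵥ a = A at *
    generalize C *ᵥ b ⬝ᵥ b = B at *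
    generalize μ *ᵥ a ⬝ᵥ b = m at *
    have : |2 * m| < A + B := abs_lt_of_sq_lt_sq (by nlinarith [sq_nonneg (A - B)]) (by linarith)
    linarith [(abs_lt.1 this).1]
end

section
/- Let x : ℝ → ℝ be twice continuously differentiable, let y ∈ ℝ³ with t := |y|²/2 > 0, and assume x′(t)² ≠ 2t. Define φ : ℝ³ → ℝ by φ(z) := x(|z|²/2). Then φ satisfies the Monge–Ampère-type equation (ma) at the point y if and only if x″(t) = (8x(t) − 10t·x′(t) − 3x′(t)³)/(6(x′(t)²·t − 2t²)). -/
/-- The radial derivative `∂_r f(y) := Σᵢ yᵢ ∂f/∂yᵢ(y)` of a function on `ℝ³`. -/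
noncomputable def radialDeriv (f : (Fin 3 → ℝ) → ℝ) (y : Fin 3 → ℝ) : ℝ :=
  ∑ i, y i * fderiv ℝ f y (Pi.single i 1)

/-- The Hessian matrix `(∂²f/∂yᵢ∂yⱼ(y))` of a function on `ℝ³`. -/
noncomputable def hessian (f : (Fin 3 → ℝ) → ℝ) (y : Fin 3 → ℝ) :
    Matrix (Fin 3) (Fin 3) ℝ :=
  Matrix.of fun i j => fderiv ℝ (fun z => fderiv ℝ f z (Pi.single j 1)) y (Pi.single i 1)

theorem q_hasFDerivAt (z : Fin 3 → ℝ) :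
    HasFDerivAt (fun z : Fin 3 → ℝ => (∑ i, (z i) ^ 2) / 2)
      (∑ i, z i • (ContinuousLinearMap.proj i : (Fin 3 → ℝ) →L[ℝ] ℝ)) z := by
  have h : ∀ i : Fin 3, HasFDerivAt (fun z : Fin 3 → ℝ => z i)
      (ContinuousLinearMap.proj i : (Fin 3 → ℝ) →L[ℝ] ℝ) z := fun i => hasFDerivAt_apply i z
  have h2 := (HasFDerivAt.fun_sum (u := Finset.univ) (fun i _ => (h i).pow 2)).mul_const (2⁻¹ : ℝ)
  simp only [div_eq_mul_inv]
  refine h2.congr_fderiv ?_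
  ext v
  simp [Fin.sum_univ_three]
  ring

theorem comp_q (g : ℝ → ℝ) (hg : Differentiable ℝ g) (z : Fin 3 → ℝ) :
    HasFDerivAt (fun z : Fin 3 → ℝ => g ((∑ i, (z i) ^ 2) / 2))
      (deriv g ((∑ i, (z i) ^ 2) / 2) •
        ∑ i, z i • (ContinuousLinearMap.proj i : (Fin 3 → ℝ) →L[ℝ] ℝ)) z :=
  (hg _).hasDerivAt.comp_hasFDerivAt z (q_hasFDerivAt z)

theorem comp_q_apply (g : ℝ → ℝ) (hg : Differentiable ℝ g) (z : Fin 3 → ℝ) (i : Fin 3) :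
    fderiv ℝ (fun z : Fin 3 → ℝ => g ((∑ i, (z i) ^ 2) / 2)) z (Pi.single i 1) =
      deriv g ((∑ i, (z i) ^ 2) / 2) * z i := by
  rw [(comp_q g hg z).fderiv]
  simp [Pi.single_apply]

theorem comp_q_mul_apply (g : ℝ → ℝ) (hg : Differentiable ℝ g) (z : Fin 3 → ℝ) (i j : Fin 3) :
    fderiv ℝ (fun z : Fin 3 → ℝ => g ((∑ i, (z i) ^ 2) / 2) * z j) z (Pi.single i 1) =
      deriv g ((∑ i, (z i) ^ 2) / 2) * z i * z j +
        g ((∑ i, (z i) ^ 2) / 2) * (if j = i then 1 else 0) := by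
  have h : HasFDerivAt (fun z : Fin 3 → ℝ => z j)
      (ContinuousLinearMap.proj j : (Fin 3 → ℝ) →L[ℝ] ℝ) z := hasFDerivAt_apply j z
  rw [((comp_q g hg z).fun_mul h).fderiv]
  simp [Pi.single_apply]
  ring

theorem radial_comp_q (g : ℝ → ℝ) (hg : Differentiable ℝ g) (z : Fin 3 → ℝ) :
    radialDeriv (fun z : Fin 3 → ℝ => g ((∑ i, (z i) ^ 2) / 2)) z =
      (fun s => 2 * s * deriv g s) ((∑ i, (z i) ^ 2) / 2) := by
  simp only [radialDeriv, comp_q_apply g hg]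
  simp only [Fin.sum_univ_three]
  ring

/-- Let `x : ℝ → ℝ` be C², let `y ∈ ℝ³` with `t := |y|²/2 > 0`, and
assume `x′(t)² ≠ 2t`. With `φ(z) := x(|z|²/2)`, the Monge–Ampère-type equation
`det(Hess φ) = (8/3)φ − (11/3)∂_r φ + ∂_r² φ` holds at `y` if and only if
`x″(t) = (8x(t) − 10t·x′(t) − 3x′(t)³)/(6(x′(t)²·t − 2t²))`. -/
theorem ma_radial_iff_ode (x : ℝ → ℝ) (hx : ContDiff ℝ 2 x)
    (y : Fin 3 → ℝ) (t : ℝ) (ht : t = (∑ i, (y i) ^ 2) / 2) (htpos : 0 < t)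
    (hne : (deriv x t) ^ 2 ≠ 2 * t)
    (φ : (Fin 3 → ℝ) → ℝ) (hφ : φ = fun z => x ((∑ i, (z i) ^ 2) / 2)) :
    (hessian φ y).det =
        8 / 3 * φ y - 11 / 3 * radialDeriv φ y + radialDeriv (radialDeriv φ) y ↔
      deriv (deriv x) t =
        (8 * x t - 10 * t * deriv x t - 3 * (deriv x t) ^ 3) /
          (6 * ((deriv x t) ^ 2 * t - 2 * t ^ 2)) := by
  have hd : Differentiable ℝ x := hx.differentiable (by norm_num)
  have hd1 : Differentiable ℝ (deriv x) :=
    ((contDiff_succ_iff_deriv (n := 1)).1 (by rw [one_add_one_eq_two]; exact hx)).2.2.differentiable (by norm_num)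
  have hd2 : Differentiable ℝ (fun s => 2 * s * deriv x s) := by fun_prop
  have hder : deriv (fun s => 2 * s * deriv x s) t = 2 * deriv x t + 2 * t * deriv (deriv x) t := by
    have h := ((hasDerivAt_id t).const_mul 2).mul (hd1 t).hasDerivAt
    have h' := h.deriv
    simp only [id, mul_one] at h'
    exact h'
  have e1 : radialDeriv φ = fun z => (fun s => 2 * s * deriv x s) ((∑ i, (z i) ^ 2) / 2) := by
    funext z
    rw [hφ, radial_comp_q x hd]
  have e2 : radialDeriv (radialDeriv φ) y =
      2 * t * (2 * deriv x t + 2 * t * deriv (deriv x) t) := by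
    rw [e1, radial_comp_q _ hd2, ← ht]
    simp only [hder]
  have e3 : radialDeriv φ y = 2 * t * deriv x t := by
    rw [e1, ht]
  have e4 : φ y = x t := by rw [hφ, ht]
  have e5 : (hessian φ y).det = (deriv x t) ^ 3 + 2 * t * (deriv x t) ^ 2 * deriv (deriv x) t := by
    have hh : hessian φ y = Matrix.of fun i j =>
        deriv (deriv x) t * y i * y j + deriv x t * (if j = i then 1 else 0) := by
      ext i j
      simp only [hessian, hφ, comp_q_apply x hd, comp_q_mul_apply _ hd1, Matrix.of_apply, ← ht]
    have h2 : 2 * t = y 0 ^ 2 + y 1 ^ 2 + y 2 ^ 2 := by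
      rw [ht, Fin.sum_univ_three]; ring
    rw [hh, Matrix.det_fin_three, h2]
    simp
    ring
  rw [e2, e3, e4, e5]
  have hne' : (6 * ((deriv x t) ^ 2 * t - 2 * t ^ 2)) ≠ 0 := by
    have : (6 * ((deriv x t) ^ 2 * t - 2 * t ^ 2)) = 6 * t * ((deriv x t) ^ 2 - 2 * t) := by ring
    rw [this]
    exact mul_ne_zero (by positivity) (sub_ne_zero.2 hne)
  rw [eq_div_iff hne']
  constructor <;> intro h <;> linarith
end

section
/- The function φ : ℝ³ → ℝ defined by φ(y₁,y₂,y₃) := (1/3)(y₁² + y₂² + y₃²) + (1/√3)·y₁y₂y₃ + 1/9 satisfies the Monge–Ampère-type equation det(Hess φ) = (8/3)φ − (11/3)∂_r φ + ∂_r² φ at every point of ℝ³. -/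
theorem aux_P (a c d : ℝ) (y v : Fin 3 → ℝ) :
    fderiv ℝ (fun y : Fin 3 → ℝ => a * ((y 0) ^ 2 + (y 1) ^ 2 + (y 2) ^ 2) +
      c * (y 0 * y 1 * y 2) + d) y v =
    a * (2 * y 0 * v 0 + 2 * y 1 * v 1 + 2 * y 2 * v 2) +
      c * (v 0 * y 1 * y 2 + y 0 * v 1 * y 2 + y 0 * y 1 * v 2) := by
  have h := fun i : Fin 3 => hasFDerivAt_apply (𝕜 := ℝ) i y
  have H := ((((((h 0).pow 2).add ((h 1).pow 2)).add ((h 2).pow 2)).const_mul a).add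
    ((((h 0).mul (h 1)).mul (h 2)).const_mul c)).add_const d
  have E := H.fderiv
  refine (congrArg (fun L : (Fin 3 → ℝ) →L[ℝ] ℝ => L v) E).trans ?_
  simp
  ring

theorem aux_Q (a c : ℝ) (i j k : Fin 3) (y v : Fin 3 → ℝ) :
    fderiv ℝ (fun y : Fin 3 → ℝ => a * y i + c * (y j * y k)) y v =
    a * v i + c * (v j * y k + y j * v k) := by
  have h := fun i : Fin 3 => hasFDerivAt_apply (𝕜 := ℝ) i y
  have H := ((h i).const_mul a).add (((h j).mul (h k)).const_mul c)
  have E := H.fderiv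
  refine (congrArg (fun L : (Fin 3 → ℝ) →L[ℝ] ℝ => L v) E).trans ?_
  simp
  ring

theorem aux_R (a c d : ℝ) :
    radialDeriv (fun y : Fin 3 → ℝ => a * ((y 0) ^ 2 + (y 1) ^ 2 + (y 2) ^ 2) +
      c * (y 0 * y 1 * y 2) + d) =
    fun y : Fin 3 → ℝ => (2 * a) * ((y 0) ^ 2 + (y 1) ^ 2 + (y 2) ^ 2) +
      (3 * c) * (y 0 * y 1 * y 2) + 0 := by
  funext y
  simp only [radialDeriv, aux_P, Fin.sum_univ_three]
  simp [Pi.single_apply]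
  ring

theorem aux_H (a c d : ℝ) (y : Fin 3 → ℝ) :
    hessian (fun y : Fin 3 → ℝ => a * ((y 0) ^ 2 + (y 1) ^ 2 + (y 2) ^ 2) +
      c * (y 0 * y 1 * y 2) + d) y =
    !![2 * a, c * y 2, c * y 1; c * y 2, 2 * a, c * y 0; c * y 1, c * y 0, 2 * a] := by
  have g0 : ∀ z : Fin 3 → ℝ, a * (2 * z 0 * (Pi.single 0 1 : Fin 3 → ℝ) 0 + 2 * z 1 * (Pi.single 0 1 : Fin 3 → ℝ) 1 + 2 * z 2 * (Pi.single 0 1 : Fin 3 → ℝ) 2) +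
      c * ((Pi.single 0 1 : Fin 3 → ℝ) 0 * z 1 * z 2 + z 0 * (Pi.single 0 1 : Fin 3 → ℝ) 1 * z 2 + z 0 * z 1 * (Pi.single 0 1 : Fin 3 → ℝ) 2)
      = (2 * a) * z 0 + c * (z 1 * z 2) := by
    intro z; simp [Pi.single_apply]; ring
  have g1 : ∀ z : Fin 3 → ℝ, a * (2 * z 0 * (Pi.single 1 1 : Fin 3 → ℝ) 0 + 2 * z 1 * (Pi.single 1 1 : Fin 3 → ℝ) 1 + 2 * z 2 * (Pi.single 1 1 : Fin 3 → ℝ) 2) +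
      c * ((Pi.single 1 1 : Fin 3 → ℝ) 0 * z 1 * z 2 + z 0 * (Pi.single 1 1 : Fin 3 → ℝ) 1 * z 2 + z 0 * z 1 * (Pi.single 1 1 : Fin 3 → ℝ) 2)
      = (2 * a) * z 1 + c * (z 0 * z 2) := by
    intro z; simp [Pi.single_apply]; ring
  have g2 : ∀ z : Fin 3 → ℝ, a * (2 * z 0 * (Pi.single 2 1 : Fin 3 → ℝ) 0 + 2 * z 1 * (Pi.single 2 1 : Fin 3 → ℝ) 1 + 2 * z 2 * (Pi.single 2 1 : Fin 3 → ℝ) 2) +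
      c * ((Pi.single 2 1 : Fin 3 → ℝ) 0 * z 1 * z 2 + z 0 * (Pi.single 2 1 : Fin 3 → ℝ) 1 * z 2 + z 0 * z 1 * (Pi.single 2 1 : Fin 3 → ℝ) 2)
      = (2 * a) * z 2 + c * (z 0 * z 1) := by
    intro z; simp [Pi.single_apply]; ring
  ext i j
  simp only [hessian, aux_P, Matrix.of_apply]
  fin_cases j <;> simp only [Fin.zero_eta, Fin.mk_one, Fin.reduceFinMk, g0, g1, g2, aux_Q] <;>
    fin_cases i <;> simp [Pi.single_apply]

/-- The function
`φ(y₁,y₂,y₃) = (1/3)(y₁²+y₂²+y₃²) + (1/√3) y₁y₂y₃ + 1/9` satisfies the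
Monge–Ampère-type equation `det(Hess φ) = (8/3)φ − (11/3)∂_r φ + ∂_r² φ` on all of `ℝ³`. -/
theorem homogeneous_example_satisfies_ma
    (φ : (Fin 3 → ℝ) → ℝ)
    (hφ : φ = fun y => 1 / 3 * ((y 0) ^ 2 + (y 1) ^ 2 + (y 2) ^ 2) +
      1 / Real.sqrt 3 * (y 0 * y 1 * y 2) + 1 / 9) :
    ∀ y : Fin 3 → ℝ,
      (hessian φ y).det =
        8 / 3 * φ y - 11 / 3 * radialDeriv φ y + radialDeriv (radialDeriv φ) y := by
  intro y
  subst hφ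
  have hc : (1 / Real.sqrt 3) ^ 2 = 1 / 3 := by
    rw [div_pow, Real.sq_sqrt (by norm_num)]; norm_num
  rw [aux_R, aux_R, aux_H, Matrix.det_fin_three]
  generalize 1 / Real.sqrt 3 = c at hc
  simp
  linear_combination (2 * c * (y 0 * y 1 * y 2) - 2 / 3 * ((y 0) ^ 2 + (y 1) ^ 2 + (y 2) ^ 2)) * hc
end

section
/- Let φ : ℝ³ → ℝ be defined by φ(y₁,y₂,y₃) := (1/3)(y₁² + y₂² + y₃²) + (1/√3)·y₁y₂y₃ + 1/9, let C(y) := Hess φ(y) be its Hessian matrix, and define ε² := (8/3)(φ − ∂_r φ). Then the compatibility relation det C(y) = ε²(y) + yᵀ C(y) y holds for every y ∈ ℝ³. -/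
open Matrix

theorem aux_fderiv (s : ℝ) (y v : Fin 3 → ℝ) :
    fderiv ℝ (fun y : Fin 3 → ℝ => 1 / 3 * ((y 0) ^ 2 + (y 1) ^ 2 + (y 2) ^ 2) +
      s * (y 0 * y 1 * y 2) + 1 / 9) y v =
    (2 / 3 * y 0 + s * (y 1 * y 2)) * v 0 + (2 / 3 * y 1 + s * (y 0 * y 2)) * v 1
      + (2 / 3 * y 2 + s * (y 0 * y 1)) * v 2 := by
  have h := fun i : Fin 3 => hasFDerivAt_apply (𝕜 := ℝ) i y
  have H := (((((h 0).pow 2).add ((h 1).pow 2)).add ((h 2).pow 2)).const_mul (1 / 3)).add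
    ((((h 0).mul (h 1)).mul (h 2)).const_mul s) |>.add_const (1 / 9)
  have H2 := congrArg (fun L => L v) H.fderiv
  refine Eq.trans H2 ?_
  simp
  ring

theorem aux_fderiv2 (a b c s : ℝ) (y v : Fin 3 → ℝ) :
    fderiv ℝ (fun y : Fin 3 → ℝ => (2 / 3 * y 0 + s * (y 1 * y 2)) * a
      + (2 / 3 * y 1 + s * (y 0 * y 2)) * b + (2 / 3 * y 2 + s * (y 0 * y 1)) * c) y v =
    (2 / 3 * v 0 + s * (y 1 * v 2 + y 2 * v 1)) * a
      + (2 / 3 * v 1 + s * (y 0 * v 2 + y 2 * v 0)) * b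
      + (2 / 3 * v 2 + s * (y 0 * v 1 + y 1 * v 0)) * c := by
  have h := fun i : Fin 3 => hasFDerivAt_apply (𝕜 := ℝ) i y
  have H := (((((h 0).const_mul (2 / 3)).add (((h 1).mul (h 2)).const_mul s)).mul_const a).add
    ((((h 1).const_mul (2 / 3)).add (((h 0).mul (h 2)).const_mul s)).mul_const b)).add
    ((((h 2).const_mul (2 / 3)).add (((h 0).mul (h 1)).const_mul s)).mul_const c)
  have H2 := congrArg (fun L => L v) H.fderiv
  refine Eq.trans H2 ?_
  simp
  ring

/-- For `φ(y) = (1/3)(y₁²+y₂²+y₃²) + (1/√3) y₁y₂y₃ + 1/9`,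
`C(y) := Hess φ(y)` and `ε² := (8/3)(φ − ∂_r φ)`, the compatibility relation
`det C(y) = ε²(y) + yᵀ C(y) y` holds for every `y ∈ ℝ³`. -/
theorem compatibility_relation
    (φ : (Fin 3 → ℝ) → ℝ)
    (hφ : φ = fun y => 1 / 3 * ((y 0) ^ 2 + (y 1) ^ 2 + (y 2) ^ 2) +
      1 / Real.sqrt 3 * (y 0 * y 1 * y 2) + 1 / 9)
    (C : (Fin 3 → ℝ) → Matrix (Fin 3) (Fin 3) ℝ) (hC : C = fun y => hessian φ y)
    (εsq : (Fin 3 → ℝ) → ℝ)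
    (hε : εsq = fun y => 8 / 3 * (φ y - radialDeriv φ y)) :
    ∀ y : Fin 3 → ℝ, (C y).det = εsq y + (C y).mulVec y ⬝ᵥ y := by
  intro y
  have hs : (1 / Real.sqrt 3) ^ 2 = 1 / 3 := by
    rw [div_pow, Real.sq_sqrt (by norm_num)]
    norm_num
  subst hC hε hφ
  generalize 1 / Real.sqrt 3 = s at hs
  simp only [hessian, radialDeriv, aux_fderiv, aux_fderiv2]
  simp [Matrix.det_fin_three, Matrix.mulVec, dotProduct, Fin.sum_univ_three, Pi.single_apply]
  linear_combination (-(2 / 3) * (y 0 ^ 2 + y 1 ^ 2 + y 2 ^ 2) + 2 * s * (y 0 * y 1 * y 2)) * hs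
end

section
/- Let k ≠ 0 and l ∈ ℝ, and define x : (0,∞) → ℝ by x(t) := k·t^l. Then x satisfies the identity 6(x′(t)²·t − 2t²)·x″(t) = 8x(t) − 10t·x′(t) − 3x′(t)³ for all t > 0 if and only if either l = 1/2 (with k arbitrary nonzero), or l = 3/2 and k = 2√2/9, or l = 3/2 and k = −2√2/9. -/
/-- Let `k ≠ 0`, `l ∈ ℝ` and `x(t) := k·t^l` on `(0,∞)`. Then `x`
satisfies `6(x′(t)²·t − 2t²)·x″(t) = 8x(t) − 10t·x′(t) − 3x′(t)³` for all `t > 0` if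
and only if `l = 1/2` (with `k` arbitrary nonzero), or `l = 3/2` and `k = 2√2/9`, or
`l = 3/2` and `k = −2√2/9`. -/
theorem power_solutions_of_radial_ode (k l : ℝ) (hk : k ≠ 0)
    (x : ℝ → ℝ) (hx : x = fun t => k * t ^ l) :
    (∀ t : ℝ, 0 < t →
        6 * ((deriv x t) ^ 2 * t - 2 * t ^ 2) * deriv (deriv x) t =
          8 * x t - 10 * t * deriv x t - 3 * (deriv x t) ^ 3) ↔
      l = 1 / 2 ∨ (l = 3 / 2 ∧ k = 2 * Real.sqrt 2 / 9) ∨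
        (l = 3 / 2 ∧ k = -(2 * Real.sqrt 2 / 9)) := by
  have d1 : ∀ t : ℝ, 0 < t → deriv x t = k * l * t ^ (l - 1) := by
    intro t ht
    have h := (Real.hasDerivAt_rpow_const (x := t) (p := l) (Or.inl ht.ne')).const_mul k
    rw [hx, h.deriv]; ring
  have d2 : ∀ t : ℝ, 0 < t → deriv (deriv x) t = k * l * (l - 1) * t ^ (l - 1 - 1) := by
    intro t ht
    have h := (Real.hasDerivAt_rpow_const (x := t) (p := l - 1) (Or.inl ht.ne')).const_mul (k * l)
    have he : deriv x =ᶠ[nhds t] fun t => k * l * t ^ (l - 1) := by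
      filter_upwards [lt_mem_nhds ht] with s hs using d1 s hs
    rw [he.deriv_eq, h.deriv]; ring
  have key : ∀ t : ℝ, 0 < t →
      (6 * ((deriv x t) ^ 2 * t - 2 * t ^ 2) * deriv (deriv x) t =
          8 * x t - 10 * t * deriv x t - 3 * (deriv x t) ^ 3 ↔
        (2 * l - 1) * (3 * k ^ 2 * l ^ 3 * (t ^ l) ^ 2 - 2 * (3 * l - 4) * t ^ 3) = 0) := by
    intro t ht
    have hP : 0 < t ^ l := Real.rpow_pos_of_pos ht l
    rw [d2 t ht, d1 t ht, hx, Real.rpow_sub_one ht.ne' (l - 1), Real.rpow_sub_one ht.ne' l]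
    simp only []
    generalize t ^ l = P at *
    have hid : 6 * ((k * l * (P / t)) ^ 2 * t - 2 * t ^ 2) * (k * l * (l - 1) * (P / t / t)) -
        (8 * (k * P) - 10 * t * (k * l * (P / t)) - 3 * (k * l * (P / t)) ^ 3) =
        k * P / t ^ 3 *
        ((2 * l - 1) * (3 * k ^ 2 * l ^ 3 * P ^ 2 - 2 * (3 * l - 4) * t ^ 3)) := by
      field_simp
      ring
    have hc : k * P / t ^ 3 ≠ 0 := by positivity
    rw [← sub_eq_zero, hid, mul_eq_zero, or_iff_right hc]
  have h32 : ∀ t : ℝ, 0 < t → (t ^ (3 / 2 : ℝ)) ^ 2 = t ^ 3 := by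
    intro t ht
    rw [← Real.rpow_natCast, ← Real.rpow_mul ht.le, ← Real.rpow_natCast]
    norm_num
  have hs : Real.sqrt 2 ^ 2 = 2 := Real.sq_sqrt (by norm_num)
  constructor
  · intro h
    by_cases hl : l = 1 / 2
    · exact Or.inl hl
    right
    have hl' : 2 * l - 1 ≠ 0 := fun h0 => hl (by linarith)
    have h1 := (mul_eq_zero.mp ((key 1 one_pos).mp (h 1 one_pos))).resolve_left hl'
    have h2 := (mul_eq_zero.mp ((key 2 two_pos).mp (h 2 two_pos))).resolve_left hl'
    rw [Real.one_rpow] at h1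
    have hne : 3 * l - 4 ≠ 0 := by
      intro h0
      have : l = 4 / 3 := by linarith
      subst this
      have : k ^ 2 = 0 := by nlinarith
      exact hk (by simpa using this)
    have h8 : ((2 : ℝ) ^ l) ^ 2 = 8 := by
      have : (3 * l - 4) * (((2 : ℝ) ^ l) ^ 2 - 8) = 0 := by
        linear_combination h2 / 2 - ((2 : ℝ) ^ l) ^ 2 * h1 / 2
      have := (mul_eq_zero.mp this).resolve_left hne
      linarith
    have hl3 : l = 3 / 2 := by
      have h9 : (2 : ℝ) ^ l = (2 : ℝ) ^ (3 / 2 : ℝ) := by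
        have := h32 2 two_pos
        refine (sq_eq_sq₀ (by positivity) (by positivity)).mp ?_
        rw [h8, this]; norm_num
      have := congrArg Real.log h9
      rw [Real.log_rpow two_pos, Real.log_rpow two_pos] at this
      exact mul_right_cancel₀ (Real.log_pos one_lt_two).ne' this
    subst hl3
    have : (k - 2 * Real.sqrt 2 / 9) * (k + 2 * Real.sqrt 2 / 9) = 0 := by
      linear_combination 8 / 81 * h1 - 4 / 81 * hs
    rcases mul_eq_zero.mp this with h | h
    · exact Or.inl ⟨rfl, by linarith⟩
    · exact Or.inr ⟨rfl, by linarith⟩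
  · intro h t ht
    rw [key t ht]
    rcases h with h | ⟨h, h'⟩ | ⟨h, h'⟩
    · rw [h]; ring
    · rw [h, h32 t ht, h']; linear_combination t ^ 3 * hs
    · rw [h, h32 t ht, h']; linear_combination t ^ 3 * hs
end

section
/- Let x : (0,∞) → ℝ be twice continuously differentiable, let y ∈ ℝ³ with t := |y|²/2 > 0, assume x′(t)² ≠ 2t and that x″(t) = (8x(t) − 10t·x′(t) − 3x′(t)³)/(6(x′(t)²·t − 2t²)). Define φ(z) := x(|z|²/2) for z ∈ ℝ³, and let D(y) be the 6×6 block matrix [[Hess φ(y), −μ(y)], [μ(y), Hess φ(y)]]. Then the two conditions 'φ(y) − ∂_r φ(y) > 0 and D(y) is positive definite' hold simultaneously if and only if x(t) > 2t·x′(t) and x′(t) > √(2t), i.e. if and only if x(t) > 2t·x′(t) > 2t·√(2t). -/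
open Matrix

/-- The skew-symmetric matrix `μ(y)` associated to `y ∈ ℝ³`, with rows
`(0, y₃, −y₂)`, `(−y₃, 0, y₁)`, `(y₂, −y₁, 0)`. -/
def muMat (y : Fin 3 → ℝ) : Matrix (Fin 3) (Fin 3) ℝ :=
  !![0, y 2, -(y 1);
     -(y 2), 0, y 0;
     y 1, -(y 0), 0]

lemma aux_q (z : Fin 3 → ℝ) : HasFDerivAt (fun z : Fin 3 → ℝ => (∑ i, (z i) ^ 2) / 2)
    (∑ i, z i • (ContinuousLinearMap.proj (R := ℝ) (φ := fun _ : Fin 3 => ℝ) i)) z := by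
  have h : ∀ i : Fin 3, HasFDerivAt (fun z : Fin 3 → ℝ => z i)
    (ContinuousLinearMap.proj (R := ℝ) (φ := fun _ : Fin 3 => ℝ) i) z := fun i => hasFDerivAt_apply i z
  have h2 := (HasFDerivAt.fun_sum (u := Finset.univ) (fun i _ => (h i).pow 2)).const_mul (1/2 : ℝ)
  have e : (fun z : Fin 3 → ℝ => (∑ i, (z i) ^ 2) / 2) =
      fun z : Fin 3 → ℝ => (1/2 : ℝ) * ∑ i, (z i) ^ 2 := by
    funext z
    ring
  rw [e]
  refine h2.congr_fderiv ?_
  ext v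
  simp [Fin.sum_univ_three]
  ring

lemma aux_fd (g : ℝ → ℝ) (z : Fin 3 → ℝ) (hg : DifferentiableAt ℝ g ((∑ i, (z i) ^ 2) / 2)) :
    HasFDerivAt (fun z : Fin 3 → ℝ => g ((∑ i, (z i) ^ 2) / 2))
    (deriv g ((∑ i, (z i) ^ 2) / 2) •
      ∑ i, z i • (ContinuousLinearMap.proj (R := ℝ) (φ := fun _ : Fin 3 => ℝ) i)) z :=
  HasDerivAt.comp_hasFDerivAt z hg.hasDerivAt (aux_q z)

lemma aux_fd' (g : ℝ → ℝ) (z : Fin 3 → ℝ) (hg : DifferentiableAt ℝ g ((∑ i, (z i) ^ 2) / 2))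
    (j : Fin 3) :
    fderiv ℝ (fun z : Fin 3 → ℝ => g ((∑ i, (z i) ^ 2) / 2)) z (Pi.single j 1) =
    deriv g ((∑ i, (z i) ^ 2) / 2) * z j := by
  rw [(aux_fd g z hg).fderiv]
  simp [Pi.single_apply]

lemma aux_hess (x : ℝ → ℝ) (hx : ContDiffOn ℝ 2 x (Set.Ioi 0))
    (y : Fin 3 → ℝ) (t : ℝ) (ht : t = (∑ i, (y i) ^ 2) / 2) (htpos : 0 < t) (i j : Fin 3) :
    hessian (fun z => x ((∑ i, (z i) ^ 2) / 2)) y i j =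
      deriv (deriv x) t * y i * y j + (if i = j then deriv x t else 0) := by
  have hd : ∀ s, 0 < s → DifferentiableAt ℝ x s := fun s hs =>
    (hx.differentiableOn (by norm_num)).differentiableAt (Ioi_mem_nhds hs)
  have hd2 : DifferentiableAt ℝ (deriv x) t :=
    ((hx.deriv_of_isOpen (m := 1) isOpen_Ioi (by norm_num)).differentiableOn
      (by norm_num)).differentiableAt (Ioi_mem_nhds htpos)
  have hev : (fun z : Fin 3 → ℝ => fderiv ℝ (fun z : Fin 3 → ℝ => x ((∑ i, (z i) ^ 2) / 2)) z
      (Pi.single j 1)) =ᶠ[nhds y] fun z => deriv x ((∑ i, (z i) ^ 2) / 2) * z j := by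
    have hc := (aux_q y).continuousAt
    have : ∀ᶠ z : Fin 3 → ℝ in nhds y, (∑ i, (z i) ^ 2) / 2 ∈ Set.Ioi (0:ℝ) :=
      hc (Ioi_mem_nhds (by show 0 < (∑ i, (y i) ^ 2) / 2; rw [← ht]; exact htpos))
    filter_upwards [this] with z hz
    exact aux_fd' x z (hd _ hz) j
  have h1 := aux_fd (deriv x) y (by rw [← ht]; exact hd2)
  have h2 := h1.mul (hasFDerivAt_apply (𝕜 := ℝ) j y)
  simp only [hessian, Matrix.of_apply]
  rw [hev.fderiv_eq]
  erw [h2.fderiv]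
  rw [← ht]
  simp [Pi.single_apply]
  by_cases hij : i = j
  · subst hij; simp; ring
  · have : ¬ j = i := fun h => hij h.symm
    simp [hij, this]; ring

/-- The quadratic form. -/
noncomputable def qf (p s : ℝ) (y : Fin 3 → ℝ) (a b c d e f : ℝ) : ℝ :=
  p * (a^2+b^2+c^2+d^2+e^2+f^2) + s * ((y 0*a+y 1*b+y 2*c)^2 + (y 0*d+y 1*e+y 2*f)^2)
    + 2 * (d * (b * y 2 - c * y 1) + e * (c * y 0 - a * y 2) + f * (a * y 1 - b * y 0))

lemma aux_quad (p s : ℝ) (y : Fin 3 → ℝ) (H : Matrix (Fin 3) (Fin 3) ℝ)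
    (hH : ∀ i j, H i j = s * y i * y j + if i = j then p else 0) (w : Fin 3 ⊕ Fin 3 → ℝ) :
    star w ⬝ᵥ (Matrix.fromBlocks H (-(muMat y)) (muMat y) H *ᵥ w) =
    qf p s y (w (.inl 0)) (w (.inl 1)) (w (.inl 2)) (w (.inr 0)) (w (.inr 1)) (w (.inr 2)) := by
  simp [dotProduct, Matrix.mulVec, Fin.sum_univ_three, hH, muMat, qf]
  ring

lemma aux_pos (p s r : ℝ) (y : Fin 3 → ℝ) (hr : 0 < r) (hy : y 0^2+y 1^2+y 2^2 = r^2)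
    (hp : r < p) (hs : 0 < p + s * r^2) (a b c d e f : ℝ)
    (hne : 0 < a^2+b^2+c^2+d^2+e^2+f^2) : 0 < qf p s y a b c d e f := by
  obtain ⟨m, hm, h1, h2⟩ : ∃ m, 0 < m ∧ m ≤ p - r ∧ m ≤ p + s*r^2 :=
    ⟨min (p-r) (p+s*r^2), lt_min (by linarith) hs, min_le_left _ _, min_le_right _ _⟩
  unfold qf
  generalize y 0 = y0, y 1 = y1, y 2 = y2 at *
  set A := (y0*a+y1*b+y2*c)^2 + (y0*d+y1*e+y2*f)^2 with hA
  set u1 := b*y2-c*y1 with hu1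
  set u2 := c*y0-a*y2 with hu2
  set u3 := a*y1-b*y0 with hu3
  set v1 := e*y2-f*y1 with hv1
  set v2 := f*y0-d*y2 with hv2
  set v3 := d*y1-e*y0 with hv3
  set B := u1^2+u2^2+u3^2+v1^2+v2^2+v3^2 with hB
  have hAB : A + B = r^2 * (a^2+b^2+c^2+d^2+e^2+f^2) := by rw [← hy]; simp only [hA, hB, hu1, hu2, hu3, hv1, hv2, hv3]; ring
  have hA0 : 0 ≤ A := by positivity
  have hB0 : 0 ≤ B := by positivity
  have e1 : (y1*v3-y2*v2)^2+(y2*v1-y0*v3)^2+(y0*v2-y1*v1)^2 = r^2*(v1^2+v2^2+v3^2) := by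
    rw [← hy]; simp only [hv1, hv2, hv3]; ring
  have e2 : u1*(y1*v3-y2*v2)+u2*(y2*v1-y0*v3)+u3*(y0*v2-y1*v1) = r^2*(d*u1+e*u2+f*u3) := by
    rw [← hy]; simp only [hu1, hu2, hu3, hv1, hv2, hv3]; ring
  have e3 : 0 ≤ r * (r * B + 2 * r^2 * (d*u1+e*u2+f*u3)) := by
    have : r * (r * B + 2 * r^2 * (d*u1+e*u2+f*u3)) =
      (r*u1+(y1*v3-y2*v2))^2 + (r*u2+(y2*v1-y0*v3))^2 + (r*u3+(y0*v2-y1*v1))^2 := by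
      rw [hB]; linear_combination (-1)*e1 - 2*r*e2
    rw [this]; positivity
  have e4 : 0 ≤ r * B + 2 * r^2 * (d*u1+e*u2+f*u3) := nonneg_of_mul_nonneg_right e3 hr
  have e5 : r^2 * (p * (a^2+b^2+c^2+d^2+e^2+f^2) + s * A + 2*(d*u1+e*u2+f*u3)) =
      (p+s*r^2)*A + (p-r)*B + (r * B + 2 * r^2 * (d*u1+e*u2+f*u3)) := by
    linear_combination (-p)*hAB
  have e6 : 0 < A + B := by rw [hAB]; positivity
  have e7 : 0 < r^2 * (p * (a^2+b^2+c^2+d^2+e^2+f^2) + s * A + 2*(d*u1+e*u2+f*u3)) := by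
    rw [e5]
    have f1 := mul_le_mul_of_nonneg_right h1 hB0
    have f2 := mul_le_mul_of_nonneg_right h2 hA0
    have f3 := mul_pos hm e6
    rw [mul_add] at f3
    linarith only [f1, f2, f3, e4]
  exact (mul_pos_iff_of_pos_left (by positivity)).1 e7

lemma aux_ge (p s r : ℝ) (y : Fin 3 → ℝ) (hr : 0 < r) (hy : y 0^2+y 1^2+y 2^2 = r^2)
    (h : ∀ a b c d e f, 0 ≤ qf p s y a b c d e f) : r ≤ p := by
  have k1 := h 0 (r * y 2) (-(r * y 1)) (-(y 1^2+y 2^2)) (y 0*y 1) (y 0*y 2)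
  have k2 := h (-(r * y 2)) 0 (r * y 0) (y 0*y 1) (-(y 0^2+y 2^2)) (y 1*y 2)
  have k3 := h (r * y 1) (-(r * y 0)) 0 (y 0*y 2) (y 1*y 2) (-(y 0^2+y 1^2))
  unfold qf at k1 k2 k3
  generalize y 0 = y0, y 1 = y1, y 2 = y2 at *
  have hh : 0 ≤ 4 * r^4 * (p - r) := by
    have k := add_nonneg (add_nonneg k1 k2) k3
    refine k.trans (le_of_eq ?_)
    have : ∀ q : ℝ, q = 4*r^2*(p-r)*(y0^2+y1^2+y2^2) → q = 4 * r^4 * (p - r) := by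
      intro q hq; rw [hq, hy]; ring
    apply this
    linear_combination (2 * (p-2*r) * (y0^2+y1^2+y2^2)) * hy
  by_contra hc
  have : 0 < 4 * r^4 * (r - p) := by
    have : 0 < r - p := by linarith
    positivity
  linarith

/-- Let `x : (0,∞) → ℝ` be C², `y ∈ ℝ³` with `t := |y|²/2 > 0`,
`x′(t)² ≠ 2t`, and suppose `x″(t) = (8x(t) − 10t·x′(t) − 3x′(t)³)/(6(x′(t)²·t − 2t²))`.
With `φ(z) := x(|z|²/2)` and `D(y) = [[Hess φ(y), −μ(y)], [μ(y), Hess φ(y)]]`, the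
conditions `φ(y) − ∂_r φ(y) > 0` and `D(y)` positive definite hold simultaneously
if and only if `x(t) > 2t·x′(t)` and `x′(t) > √(2t)`. -/
theorem admissible_set_radial (x : ℝ → ℝ) (hx : ContDiffOn ℝ 2 x (Set.Ioi 0))
    (y : Fin 3 → ℝ) (t : ℝ) (ht : t = (∑ i, (y i) ^ 2) / 2) (htpos : 0 < t)
    (hne : (deriv x t) ^ 2 ≠ 2 * t)
    (hode : deriv (deriv x) t =
      (8 * x t - 10 * t * deriv x t - 3 * (deriv x t) ^ 3) /
        (6 * ((deriv x t) ^ 2 * t - 2 * t ^ 2)))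
    (φ : (Fin 3 → ℝ) → ℝ) (hφ : φ = fun z => x ((∑ i, (z i) ^ 2) / 2)) :
    (0 < φ y - radialDeriv φ y ∧
        (Matrix.fromBlocks (hessian φ y) (-(muMat y)) (muMat y) (hessian φ y)).PosDef) ↔
      (2 * t * deriv x t < x t ∧ Real.sqrt (2 * t) < deriv x t) := by
  subst hφ
  have hd : DifferentiableAt ℝ x t :=
    (hx.differentiableOn (by norm_num)).differentiableAt (Ioi_mem_nhds htpos)
  have hH := aux_hess x hx y t ht htpos
  have hrad : radialDeriv (fun z => x ((∑ i, (z i) ^ 2) / 2)) y = 2 * t * deriv x t := by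
    unfold radialDeriv
    simp only [aux_fd' x y (by rw [← ht]; exact hd)]
    rw [← ht]
    rw [Fin.sum_univ_three] at ht ⊢
    rw [ht]
    ring
  rw [hrad]
  simp only []
  rw [← ht]
  generalize hessian (fun z => x ((∑ i, (z i) ^ 2) / 2)) y = H at hH ⊢
  generalize deriv (deriv x) t = s at *
  generalize deriv x t = p at *
  generalize x t = X at *
  obtain ⟨r, hr, hr2⟩ : ∃ r, 0 < r ∧ r^2 = 2*t :=
    ⟨Real.sqrt (2*t), Real.sqrt_pos.2 (by linarith), Real.sq_sqrt (by linarith)⟩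
  have hsq : Real.sqrt (2*t) = r := by rw [← hr2]; exact Real.sqrt_sq hr.le
  have hy : y 0^2+y 1^2+y 2^2 = r^2 := by
    rw [Fin.sum_univ_three] at ht
    linarith
  rw [hsq]
  constructor
  · rintro ⟨h1, h2⟩
    refine ⟨by linarith, lt_of_le_of_ne ?_ ?_⟩
    · refine aux_ge p s r y hr hy fun a b c d e f => ?_
      have := h2.posSemidef.dotProduct_mulVec_nonneg (Sum.elim ![a,b,c] ![d,e,f])
      rw [aux_quad p s y H hH] at this
      simpa using this
    · rintro rfl
      exact hne hr2
  · rintro ⟨h1, h2⟩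
    refine ⟨by linarith, Matrix.PosDef.of_dotProduct_mulVec_pos ?_ ?_⟩
    · ext i j
      rcases i with i | i <;> rcases j with j | j <;> fin_cases i <;> fin_cases j <;>
        simp [muMat, hH] <;> ring
    · intro w hw
      rw [aux_quad p s y H hH]
      have hpos : 0 < p^2 - 2*t := by rw [← hr2]; nlinarith
      refine aux_pos p s r y hr hy h2 ?_ _ _ _ _ _ _ ?_
      · have : p + s * r^2 = 8 * (X - 2*t*p) / (3 * (p^2-2*t)) := by
          have h6 : p^2*t-2*t^2 = t*(p^2-2*t) := by ring
          rw [hr2, hode, h6]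
          have hk0 := hpos.ne'
          have := htpos.ne'
          obtain ⟨k, hk⟩ : ∃ k, k = p^2 - 2*t := ⟨_, rfl⟩
          rw [← hk] at hk0 ⊢
          field_simp
          rw [hk]
          ring
        rw [this]
        have : 0 < X - 2*t*p := by linarith
        positivity
      · by_contra hc
        apply hw
        funext i
        rcases i with i | i <;> fin_cases i <;> simp <;> apply pow_eq_zero_iff (two_ne_zero) |>.1 <;>
          linarith [sq_nonneg (w (.inl 0)), sq_nonneg (w (.inl 1)), sq_nonneg (w (.inl 2)),
            sq_nonneg (w (.inr 0)), sq_nonneg (w (.inr 1)), sq_nonneg (w (.inr 2))]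
end

section
/- Let U ⊆ ℝ³ be open and let φ : U → ℝ be three times continuously differentiable, satisfying on all of U both the Monge–Ampère-type equation det(Hess φ) = (8/3)φ − (11/3)∂_r φ + ∂_r² φ and the positivity condition φ − ∂_r φ > 0. Set ε := ((8/3)(φ − ∂_r φ))^{1/2} and let A(y) denote the adjugate (transpose cofactor) matrix of Hess φ(y). Then for each fixed i ∈ {1,2,3}, the vector field W on U with components Wⱼ(y) := (A_{ij}(y) − yᵢ yⱼ)/ε(y)³, j = 1,2,3, is divergence-free: Σ_{j=1}^3 ∂Wⱼ/∂yⱼ = 0 on U. -/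
open Matrix

theorem aux_smooth {U : Set (Fin 3 → ℝ)} (hU : IsOpen U) {f : (Fin 3 → ℝ) → ℝ} {n : ℕ}
    (hf : ContDiffOn ℝ (n + 1 : ℕ) f U) (v : Fin 3 → ℝ) :
    ContDiffOn ℝ n (fun z => fderiv ℝ f z v) U := by
  have h : ContDiffOn ℝ n (fderiv ℝ f) U := hf.fderiv_of_isOpen hU (by norm_cast)
  exact h.clm_apply contDiffOn_const

theorem aux_symm {U : Set (Fin 3 → ℝ)} (hU : IsOpen U) {f : (Fin 3 → ℝ) → ℝ}
    (hf : ContDiffOn ℝ 2 f U) {y : Fin 3 → ℝ} (hy : y ∈ U) (v w : Fin 3 → ℝ) :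
    fderiv ℝ (fun z => fderiv ℝ f z v) y w = fderiv ℝ (fun z => fderiv ℝ f z w) y v := by
  have h : ContDiffOn ℝ 1 (fderiv ℝ f) U := hf.fderiv_of_isOpen hU (by norm_num)
  have hd : DifferentiableAt ℝ (fderiv ℝ f) y :=
    (h.contDiffAt (hU.mem_nhds hy)).differentiableAt (by norm_num)
  have e : ∀ v w : Fin 3 → ℝ, fderiv ℝ (fun z => fderiv ℝ f z v) y w
      = fderiv ℝ (fderiv ℝ f) y w v := by
    intro v w
    rw [fderiv_clm_apply hd (differentiableAt_const v)]
    simp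
  rw [e, e]
  have := (hf.contDiffAt (hU.mem_nhds hy)).isSymmSndFDerivAt (by simp)
  exact this w v

theorem aux_adj_div (h : Fin 3 → Fin 3 → (Fin 3 → ℝ) → ℝ) (y : Fin 3 → ℝ)
    (hd : ∀ i j, DifferentiableAt ℝ (h i j) y)
    (hs : ∀ i j, h i j y = h j i y)
    (T1 : ∀ i j k, fderiv ℝ (h i j) y (Pi.single k 1) = fderiv ℝ (h j i) y (Pi.single k 1))
    (T2 : ∀ i j k, fderiv ℝ (h i j) y (Pi.single k 1) = fderiv ℝ (h k j) y (Pi.single i 1))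
    (i : Fin 3) :
    (∀ j, DifferentiableAt ℝ
      (fun z => (Matrix.of fun a b => h a b z : Matrix (Fin 3) (Fin 3) ℝ).adjugate i j) y) ∧
    ∑ j, fderiv ℝ (fun z => (Matrix.of fun a b => h a b z :
      Matrix (Fin 3) (Fin 3) ℝ).adjugate i j) y (Pi.single j 1) = 0 := by
  have key : ∀ (a b c d : Fin 3 × Fin 3) (v : Fin 3 → ℝ),
      fderiv ℝ (fun z => h a.1 a.2 z * h b.1 b.2 z - h c.1 c.2 z * h d.1 d.2 z) y v =
      h a.1 a.2 y * fderiv ℝ (h b.1 b.2) y v + h b.1 b.2 y * fderiv ℝ (h a.1 a.2) y v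
       - (h c.1 c.2 y * fderiv ℝ (h d.1 d.2) y v + h d.1 d.2 y * fderiv ℝ (h c.1 c.2) y v) := by
    intro a b c d v
    have := (((hd a.1 a.2).hasFDerivAt.mul (hd b.1 b.2).hasFDerivAt).sub
      ((hd c.1 c.2).hasFDerivAt.mul (hd d.1 d.2).hasFDerivAt))
    erw [this.fderiv]
    simp
  have key2 : ∀ (a b c d : Fin 3 × Fin 3) (v : Fin 3 → ℝ),
      fderiv ℝ (fun z => -(h a.1 a.2 z * h b.1 b.2 z) + h c.1 c.2 z * h d.1 d.2 z) y v =
      -(h a.1 a.2 y * fderiv ℝ (h b.1 b.2) y v + h b.1 b.2 y * fderiv ℝ (h a.1 a.2) y v)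
       + (h c.1 c.2 y * fderiv ℝ (h d.1 d.2) y v + h d.1 d.2 y * fderiv ℝ (h c.1 c.2) y v) := by
    intro a b c d v
    have e : (fun z => -(h a.1 a.2 z * h b.1 b.2 z) + h c.1 c.2 z * h d.1 d.2 z) =
      (fun z => h c.1 c.2 z * h d.1 d.2 z - h a.1 a.2 z * h b.1 b.2 z) := by
      funext z; ring
    rw [e, key]; ring
  have s10 := hs 1 0
  have s20 := hs 2 0
  have s21 := hs 2 1
  constructor
  · intro j
    fin_cases i <;> fin_cases j <;> simp [adjugate_fin_three] <;> fun_prop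
  · have K := fun a1 a2 b1 b2 c1 c2 d1 d2 => key (a1, a2) (b1, b2) (c1, c2) (d1, d2)
    have K2 := fun a1 a2 b1 b2 c1 c2 d1 d2 => key2 (a1, a2) (b1, b2) (c1, c2) (d1, d2)
    simp only at K K2
    fin_cases i <;> simp [adjugate_fin_three, Fin.sum_univ_three] <;> simp only [K, K2] <;>
    simp only [s10, s20, s21, T1 1 0, T1 2 0, T1 2 1, T2 0 0 1, T2 0 1 1, T2 0 2 1, T2 0 0 2,
      T2 0 1 2, T2 0 2 2, T2 1 1 2, T2 1 2 2] <;> ring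

theorem aux_quot (a s : (Fin 3 → ℝ) → ℝ) (y v : Fin 3 → ℝ)
    (ha : DifferentiableAt ℝ a y) (hs : DifferentiableAt ℝ s y) (hp : 0 < s y) :
    fderiv ℝ (fun z => a z / (Real.sqrt (8 / 3 * s z)) ^ 3) y v =
      (fderiv ℝ a y v * s y - 3 / 2 * a y * fderiv ℝ s y v) /
        (s y * (Real.sqrt (8 / 3 * s y)) ^ 3) := by
  have h0 : 0 < 8 / 3 * s y := by positivity
  have h1 := ((hs.hasFDerivAt.const_mul (8 / 3 : ℝ)).sqrt h0.ne').pow 3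
  have hq : 0 < Real.sqrt (8 / 3 * s y) := Real.sqrt_pos.2 h0
  have h2 := ha.hasFDerivAt.fun_mul
    ((hasDerivAt_inv (pow_ne_zero 3 hq.ne')).comp_hasFDerivAt y h1)
  simp only [div_eq_mul_inv (a _)]
  erw [h2.fderiv]
  have hsq : Real.sqrt (8 / 3 * s y) ^ 2 = 8 / 3 * s y := Real.sq_sqrt h0.le
  have hsy : s y = 3 / 8 * Real.sqrt (8 / 3 * s y) ^ 2 := by rw [hsq]; ring
  simp
  generalize Real.sqrt (8 / 3 * s y) = q at *
  rw [hsy]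
  field_simp
  ring

/-- Let `U ⊆ ℝ³` be open and `φ : U → ℝ` be C³, satisfying on `U` the
Monge–Ampère-type equation `det(Hess φ) = (8/3)φ − (11/3)∂_r φ + ∂_r² φ` and the
positivity `φ − ∂_r φ > 0`. With `ε := ((8/3)(φ − ∂_r φ))^{1/2}` and
`A(y) := adj(Hess φ(y))`, for each fixed `i` the vector field
`Wⱼ(y) := (A_{ij}(y) − yᵢyⱼ)/ε(y)³` is divergence-free on `U`. -/
theorem divergence_free_tau (U : Set (Fin 3 → ℝ)) (hU : IsOpen U)
    (φ : (Fin 3 → ℝ) → ℝ) (hφ : ContDiffOn ℝ 3 φ U)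
    (hma : ∀ y ∈ U, (hessian φ y).det =
      8 / 3 * φ y - 11 / 3 * radialDeriv φ y + radialDeriv (radialDeriv φ) y)
    (hpos : ∀ y ∈ U, 0 < φ y - radialDeriv φ y)
    (i : Fin 3) :
    ∀ y ∈ U,
      ∑ j, fderiv ℝ
        (fun z => ((hessian φ z).adjugate i j - z i * z j) /
          (Real.sqrt (8 / 3 * (φ z - radialDeriv φ z))) ^ 3)
        y (Pi.single j 1) = 0 := by
  intro y hy
  have hn : U ∈ nhds y := hU.mem_nhds hy
  have c0 : ContDiffOn ℝ (2 + 1 : ℕ) φ U := by exact_mod_cast hφ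
  have c1 : ∀ j : Fin 3, ContDiffOn ℝ 2 (fun z => fderiv ℝ φ z (Pi.single j 1)) U := fun j => by
    exact_mod_cast aux_smooth hU c0 (Pi.single j 1)
  have c2 : ∀ i j : Fin 3, ContDiffOn ℝ 1 (fun z => hessian φ z i j) U := fun i j => by
    have := aux_smooth (n := 1) hU (by exact_mod_cast c1 j) (Pi.single i 1)
    exact_mod_cast this
  have dφ : ∀ z ∈ U, DifferentiableAt ℝ φ z := fun z hz =>
    (hφ.contDiffAt (hU.mem_nhds hz)).differentiableAt (by norm_num)
  have dp : ∀ j : Fin 3, ∀ z ∈ U, DifferentiableAt ℝ (fun z => fderiv ℝ φ z (Pi.single j 1)) z :=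
    fun j z hz => ((c1 j).contDiffAt (hU.mem_nhds hz)).differentiableAt (by norm_num)
  have dh : ∀ i j : Fin 3, DifferentiableAt ℝ (fun z => hessian φ z i j) y :=
    fun i j => ((c2 i j).contDiffAt hn).differentiableAt (by norm_num)
  have sym : ∀ z ∈ U, ∀ i j, hessian φ z i j = hessian φ z j i := fun z hz i j =>
    aux_symm hU (hφ.of_le (by norm_num)) hz _ _
  obtain ⟨dA, divA⟩ := aux_adj_div (fun i j z => hessian φ z i j) y dh (sym y hy)
    (fun i j k => by
      have : (fun z => hessian φ z i j) =ᶠ[nhds y] (fun z => hessian φ z j i) :=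
        Filter.eventually_of_mem hn (fun z hz => sym z hz i j)
      simp only [this.fderiv_eq])
    (fun i j k => aux_symm hU (c1 j) hy _ _) i
  -- derivative of a radial derivative
  have dr : ∀ z ∈ U, ∀ k : Fin 3, DifferentiableAt ℝ (radialDeriv φ) z ∧
      fderiv ℝ (radialDeriv φ) z (Pi.single k 1) =
        fderiv ℝ φ z (Pi.single k 1) + ∑ j, hessian φ z k j * z j := by
    intro z hz k
    have hp : ∀ j : Fin 3, HasFDerivAt (fun w : Fin 3 → ℝ => w j)
      (ContinuousLinearMap.proj (R := ℝ) (φ := fun _ : Fin 3 => ℝ) j) z :=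
      fun j => hasFDerivAt_apply j z
    have := HasFDerivAt.fun_sum (u := Finset.univ)
      (fun (j : Fin 3) _ => (hp j).mul (dp j z hz).hasFDerivAt)
    have h2 : HasFDerivAt (radialDeriv φ) _ z := this
    refine ⟨h2.differentiableAt, ?_⟩
    rw [h2.fderiv]
    fin_cases k <;> simp [Fin.sum_univ_three, hessian] <;> ring
  have ds : DifferentiableAt ℝ (fun z => φ z - radialDeriv φ z) y :=
    (dφ y hy).sub (dr y hy 0).1
  have es : ∀ k : Fin 3, fderiv ℝ (fun z => φ z - radialDeriv φ z) y (Pi.single k 1)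
      = -∑ j, hessian φ y k j * y j := by
    intro k
    rw [fderiv_fun_sub (dφ y hy) (dr y hy 0).1]
    simp [(dr y hy k).2]
  have dy : ∀ j : Fin 3, DifferentiableAt ℝ (fun z : Fin 3 → ℝ => z i * z j) y := fun j => by
    fun_prop
  have dA' : ∀ j, DifferentiableAt ℝ (fun z => (hessian φ z).adjugate i j) y := dA
  have divA' : ∑ j, fderiv ℝ (fun z => (hessian φ z).adjugate i j) y (Pi.single j 1) = 0 := divA
  have ea : ∀ j : Fin 3, fderiv ℝ (fun z => (hessian φ z).adjugate i j - z i * z j) y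
      (Pi.single j 1) = fderiv ℝ (fun z => (hessian φ z).adjugate i j) y (Pi.single j 1)
        - (y i + if i = j then y j else 0) := by
    intro j
    rw [fderiv_fun_sub (dA' j) (dy j)]
    have hp : ∀ j : Fin 3, HasFDerivAt (fun w : Fin 3 → ℝ => w j)
      (ContinuousLinearMap.proj (R := ℝ) (φ := fun _ : Fin 3 => ℝ) j) y :=
      fun j => hasFDerivAt_apply j y
    have h3 := ((hp i).fun_mul (hp j)).fderiv
    rw [h3]
    simp [Pi.single_apply]
  have hq := fun (j : Fin 3) => aux_quot
    (fun z => (hessian φ z).adjugate i j - z i * z j) (fun z => φ z - radialDeriv φ z) y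
    (Pi.single j 1) ((dA' j).sub (dy j)) ds (hpos y hy)
  rw [Finset.sum_congr rfl (fun j _ => hq j), ← Finset.sum_div]
  simp only [ea, es]
  refine div_eq_zero_iff.2 (Or.inl ?_)
  have hm := hma y hy
  have hrr : radialDeriv (radialDeriv φ) y = radialDeriv φ y +
      ∑ k, y k * ∑ j, hessian φ y k j * y j := by
    conv_lhs => rw [radialDeriv]
    simp only [(dr y hy _).2, mul_add, Finset.sum_add_distrib]
    rfl
  rw [hrr] at hm
  have hadj : ∀ k, ∑ j, (hessian φ y).adjugate i j * hessian φ y j k =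
      (hessian φ y).det * (if i = k then 1 else 0) := by
    intro k
    have := congrFun (congrFun (adjugate_mul (hessian φ y)) i) k
    simpa [Matrix.mul_apply, Matrix.one_apply] using this
  have a0 := hadj 0
  have a1 := hadj 1
  have a2 := hadj 2
  clear hadj hq ea es hrr
  generalize (hessian φ y).adjugate = A at *
  generalize (hessian φ y).det = d at *
  generalize hessian φ y = H at *
  simp only [Fin.sum_univ_three] at *
  have hδ : y i = (if i = 0 then 1 else 0) * y 0 + (if i = 1 then 1 else 0) * y 1
      + (if i = 2 then 1 else 0) * y 2 := by fin_cases i <;> simp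
  have hδ2 : (if i = 0 then y 0 else 0) + (if i = 1 then y 1 else 0)
      + (if i = 2 then y 2 else 0) = y i := by fin_cases i <;> simp
  linear_combination (φ y - radialDeriv φ y) * divA' - (φ y - radialDeriv φ y) * hδ2
    + 3 / 2 * (y 0 * a0 + y 1 * a1 + y 2 * a2) + 3 / 2 * y i * hm - 3 / 2 * d * hδ
end
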